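/- In the free group with involutive generator set E, partitioned as E = ⋃_{a∈Γ} E_a, the resulting Cayley frame is coset acyclic: it contains no coset cycle of any length m ≥ 2. -/

import Mathlib

/-- Reduced concatenation of words over involutive generators. -/
def rmul {E : Type*} [DecidableEq E] : List E → List E → List E
  | l, [] => l
  | l, e :: m =>
    if l.getLast? = some e then rmul l.dropLast m else l ++ e :: m
termination_by l m => m.length

/-- Agreement up to tails with all letters satisfying `P`. -/
def TailRel {E : Type*} (P : E → Prop) (l h : List E) : Prop :=
  ∃ p a b : List E, l = p ++ a ∧ h = p ++ b ∧ (∀ e ∈ a, P e) ∧ (∀ e ∈ b, P e)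

theorem TailRel.symm' {E : Type*} {P : E → Prop} {l h : List E} (H : TailRel P l h) :
    TailRel P h l := by
  obtain ⟨p, a, b, h1, h2, h3, h4⟩ := H
  exact ⟨p, b, a, h2, h1, h4, h3⟩

theorem TailRel.rfl' {E : Type*} {P : E → Prop} (l : List E) : TailRel P l l :=
  ⟨l, [], [], by simp⟩

theorem TailRel.mono' {E : Type*} {P Q : E → Prop} (hPQ : ∀ e, P e → Q e) {l h : List E}
    (H : TailRel P l h) : TailRel Q l h := by
  obtain ⟨p, a, b, h1, h2, h3, h4⟩ := H
  exact ⟨p, a, b, h1, h2, fun e he => hPQ e (h3 e he), fun e he => hPQ e (h4 e he)⟩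

theorem TailRel.trans' {E : Type*} {P : E → Prop} {l h k : List E} (H : TailRel P l h)
    (K : TailRel P h k) : TailRel P l k := by
  obtain ⟨p, a, b, rfl, rfl, h3, h4⟩ := H
  obtain ⟨q, c, d, h5, rfl, h7, h8⟩ := K
  rcases List.append_eq_append_iff.1 h5 with ⟨r, rfl, rfl⟩ | ⟨r, rfl, rfl⟩
  · refine ⟨p, a, r ++ d, rfl, by simp, h3, ?_⟩
    intro e he
    rcases List.mem_append.1 he with he | he
    · exact h4 e (by simp [he])
    · exact h8 e he
  · refine ⟨q, r ++ a, d, by simp, rfl, ?_, h8⟩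
    intro e he
    rcases List.mem_append.1 he with he | he
    · exact h7 e (by simp [he])
    · exact h3 e he

theorem rmul_iff_tailRel {E : Type*} [DecidableEq E] (P : E → Prop) (h : List E) :
    ∀ l : List E, (∀ e ∈ rmul l.reverse h, P e) ↔ TailRel P l h := by
  induction h with
  | nil =>
    intro l
    constructor
    · intro H
      exact ⟨[], l, [], by simp, by simp, by simpa [rmul] using H, by simp⟩
    · rintro ⟨p, a, b, rfl, h2, h3, h4⟩
      obtain ⟨rfl, rfl⟩ : p = [] ∧ b = [] := by simpa using h2.symm
      simpa [rmul] using h3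
  | cons x h ih =>
    intro l
    cases l with
    | nil =>
      constructor
      · intro H
        exact ⟨[], [], x :: h, by simp, by simp, by simp, by simpa [rmul] using H⟩
      · rintro ⟨p, a, b, h1, h2, h3, h4⟩
        obtain ⟨rfl, rfl⟩ : p = [] ∧ a = [] := by simpa using h1.symm
        obtain rfl : x :: h = b := by simpa using h2
        simpa [rmul] using h4
    | cons y l =>
      by_cases hxy : y = x
      · subst hxy
        have : rmul (y :: l).reverse (y :: h) = rmul l.reverse h := by
          rw [rmul]; simp
        rw [this, ih]
        constructor
        · rintro ⟨p, a, b, rfl, rfl, h3, h4⟩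
          exact ⟨y :: p, a, b, rfl, rfl, h3, h4⟩
        · rintro ⟨p, a, b, h1, h2, h3, h4⟩
          cases p with
          | nil =>
            simp only [List.nil_append] at h1 h2
            subst h1 h2
            exact ⟨[], l, h, rfl, rfl, fun e he => h3 e (by simp [he]),
              fun e he => h4 e (by simp [he])⟩
          | cons z p =>
            simp only [List.cons_append, List.cons.injEq] at h1 h2
            exact ⟨p, a, b, h1.2, h2.2, h3, h4⟩
      · have : rmul (y :: l).reverse (x :: h) = (y :: l).reverse ++ x :: h := by
          rw [rmul]; simp [hxy]
        rw [this]
        constructor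
        · intro H
          refine ⟨[], y :: l, x :: h, rfl, rfl, ?_, ?_⟩
          · intro e he
            exact H e (List.mem_append_left _ (List.mem_reverse.2 he))
          · intro e he
            exact H e (List.mem_append_right _ he)
        · rintro ⟨p, a, b, h1, h2, h3, h4⟩
          cases p with
          | nil =>
            simp only [List.nil_append] at h1 h2
            subst h1 h2
            intro e he
            rcases List.mem_append.1 he with he | he
            · exact h3 e (List.mem_reverse.1 he)
            · exact h4 e he
          | cons z p =>
            simp only [List.cons_append, List.cons.injEq] at h1 h2
            exact absurd (h1.1.trans h2.1.symm) hxy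

/-- The Cayley frame of the free group on involutive generators `E`, partitioned
among agents by `ag : E → Γ`, is coset acyclic: it contains no coset cycle of any
length `m ≥ 2`.  Here `g⁻¹h` is the reduced product of the reverse of `g` with `h`,
and `(g,h) ∈ R_α` iff every letter of `g⁻¹h` belongs to an agent in `α`;
`u ∈ [g]_α` iff `(g,u) ∈ R_α`. -/
theorem stmt9 (E Γ : Type*) [DecidableEq E] (ag : E → Γ) (m : ℕ) (hm : 2 ≤ m) :
    ¬ ∃ (w : ZMod m → {l : List E // l.Chain' (· ≠ ·)}) (α : ZMod m → Set Γ),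
      ∀ i : ZMod m,
        (∀ e ∈ rmul (w i).val.reverse (w (i + 1)).val, ag e ∈ α i) ∧
        ¬ ∃ u : {l : List E // l.Chain' (· ≠ ·)},
          (∀ e ∈ rmul (w i).val.reverse u.val, ag e ∈ α (i - 1) ∩ α i) ∧
          (∀ e ∈ rmul (w (i + 1)).val.reverse u.val, ag e ∈ α i ∩ α (i + 1)) := by
  rintro ⟨w, α, H⟩
  haveI : NeZero m := ⟨by omega⟩
  simp only [rmul_iff_tailRel] at H
  -- minimal representatives of the small cosets
  have hmin : ∀ i : ZMod m, ∃ v : {l : List E // l.Chain' (· ≠ ·)},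
      TailRel (fun e => ag e ∈ α (i - 1) ∩ α i) (w i).val v.val ∧
      ∀ v' : {l : List E // l.Chain' (· ≠ ·)},
        TailRel (fun e => ag e ∈ α (i - 1) ∩ α i) (w i).val v'.val →
          v.val.length ≤ v'.val.length := by
    intro i
    let S : Set {l : List E // l.Chain' (· ≠ ·)} :=
      {v | TailRel (fun e => ag e ∈ α (i - 1) ∩ α i) (w i).val v.val}
    have hS : S.Nonempty := ⟨w i, TailRel.rfl' _⟩
    let f : {l : List E // l.Chain' (· ≠ ·)} → ℕ := fun v => v.val.length
    exact ⟨Function.argminOn f S hS, Function.argminOn_mem f S hS,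
      fun v' hv' => Function.argminOn_le f S hv'⟩
  choose v hv hvmin using hmin
  have hv' : ∀ i : ZMod m,
      TailRel (fun e => ag e ∈ α i ∩ α (i + 1)) (w (i + 1)).val (v (i + 1)).val := by
    intro i
    have := hv (i + 1)
    rwa [add_sub_cancel_right] at this
  have hstep : ∀ i : ZMod m, TailRel (fun e => ag e ∈ α i) (v i).val (v (i + 1)).val := by
    intro i
    exact (((hv i).mono' (fun e he => he.2)).symm'.trans' (H i).1).trans'
      ((hv' i).mono' (fun e he => he.1))
  have hne : ∀ i : ZMod m, (v i).val ≠ (v (i + 1)).val := by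
    intro i heq
    refine (H i).2 ⟨v i, hv i, ?_⟩
    rw [heq]
    exact hv' i
  obtain ⟨i, hi⟩ := Finite.exists_max (fun i : ZMod m => (v i).val.length)
  have hprev := hstep (i - 1)
  have hneprev := hne (i - 1)
  have hnext := hstep i
  have hnenext := hne i
  rw [sub_add_cancel] at hprev hneprev
  obtain ⟨p, a, b, h1, h2, h3, h4⟩ := hprev
  obtain ⟨q, c, d, h5, h6, h7, h8⟩ := hnext
  have hlen1 := hi (i - 1)
  have hlen2 := hi (i + 1)
  rcases List.eq_nil_or_concat b with rfl | ⟨b', x, rfl⟩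
  · apply hneprev
    simp only [h1, h2, List.length_append, List.length_nil] at hlen1
    have : a = [] := List.length_eq_zero_iff.1 (by omega)
    rw [h1, h2, this]
  rcases List.eq_nil_or_concat c with rfl | ⟨c', y, rfl⟩
  · apply hnenext
    simp only [h5, h6, List.length_append, List.length_nil] at hlen2
    have : d = [] := List.length_eq_zero_iff.1 (by omega)
    rw [h5, h6, this]
  simp only [List.concat_eq_append] at *
  have hxy : p ++ b' = q ++ c' ∧ [x] = [y] := by
    apply List.append_inj'
    · simpa using h2.symm.trans h5
    · rfl
  have hx1 : ag x ∈ α (i - 1) := h4 x (by simp)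
  have hx2 : ag x ∈ α i := by
    have := hxy.2
    simp only [List.cons.injEq, and_true] at this
    rw [this]
    exact h7 y (by simp)
  have hch : (p ++ b').Chain' (· ≠ ·) := by
    have := (v i).property
    rw [h2, ← List.append_assoc] at this
    exact this.left_of_append
  have := hvmin i ⟨p ++ b', hch⟩ ((hv i).trans'
    ⟨p ++ b', [x], [], by rw [h2, List.append_assoc], by simp, by simpa using ⟨hx1, hx2⟩, by simp⟩)
  simp only [h2, List.length_append, List.length_cons, List.length_nil] at this
  omega
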